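/- Let VPF_n^↓ denote the set of non-increasing vacillating parking functions of length n. Then |VPF_1^↓| = 1, |VPF_2^↓| = 3, |VPF_3^↓| = 6, and for every integer n ≥ 4, |VPF_n^↓| = 2·|VPF_{n-1}^↓| + |VPF_{n-3}^↓|. -/

import Mathlib

/-- One car with (1-indexed) preference `p` attempts to park on a one-way street with
spots `1,…,n` under the `k`-vacillating rule, given the set `occ` of occupied spots:
it parks in spot `p` if unoccupied; otherwise in spot `p - k` if `p - k ≥ 1` and it is
unoccupied; otherwise in spot `p + k` if `p + k ≤ n` and it is unoccupied; otherwise it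
fails to park (`none`). -/
def parkStep (n k : ℕ) (occ : Finset ℕ) (p : ℕ) : Option ℕ :=
  if p ∉ occ then some p
  else if k < p ∧ p - k ∉ occ then some (p - k)
  else if p + k ≤ n ∧ p + k ∉ occ then some (p + k)
  else none

/-- Park the cars whose preference list is given, in order, under the `k`-vacillating
rule on a street with spots `1,…,n`, starting from occupied set `occ`.  Returns the list
of spots occupied by the cars (in the order the cars arrive), or `none` if some car
fails to park. -/
def parkAssign (n k : ℕ) (occ : Finset ℕ) : List ℕ → Option (List ℕ)
  | [] => some []
  | p :: ps =>
    match parkStep n k occ p with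
    | none => none
    | some s => (parkAssign n k (insert s occ) ps).map (s :: ·)

/-- The 1-indexed preference list in `[n]^m` associated to `α : Fin m → Fin n`
(car `i+1` prefers spot `α i + 1`). -/
def prefList {m n : ℕ} (α : Fin m → Fin n) : List ℕ :=
  List.ofFn fun i => (α i : ℕ) + 1

/-- The set of `k`-vacillating parking functions of length `n`:
preference lists in `[n]^n` (encoded as `Fin n → Fin n`) for which all `n` cars park. -/
def VPFk (n k : ℕ) : Finset (Fin n → Fin n) :=
  Finset.univ.filter fun α => (parkAssign n k ∅ (prefList α)).isSome

/-- The set of vacillating parking functions of length `n` (the case `k = 1`). -/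
def VPF (n : ℕ) : Finset (Fin n → Fin n) := VPFk n 1

/-- The set of non-increasing vacillating parking functions of length `n`. -/
def VPFdown (n : ℕ) : Finset (Fin n → Fin n) :=
  (VPF n).filter fun α => ∀ i j : Fin n, i ≤ j → α j ≤ α i

/-!
How a non-increasing list of preferences can be completed depends only on the set `occ` of occupied
spots and on a bound `j` for the remaining preferences; the completions (`fillings n k occ j`) are
counted by deciding whether the next car prefers `j`.

For `k = 1` two families matter: let `a m` count them for `occ = {m + 1, …, n}`, `j = m + 1`, and
`b m` for `occ = {m + 2, …, n}`, `j = m`.  Deciding on the preferences `m + 2` and `m + 1` gives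
`a (m + 1) = 2 * a m + b m`.  In the family of `b (m + 2)` the spot `m + 3` is reached only from
`m + 2`, and only by the last of three cars which prefer `m + 2` and park in `m + 2`, `m + 1`,
`m + 3`; so `b (m + 2) = a m`.  On the empty street of length `m + 1` the count is `a m + b m`.
-/

open Finset

section ParkStep

variable {n k p s : ℕ} {occ : Finset ℕ} {L : List ℕ}

theorem isSome_parkAssign_cons :
    (parkAssign n k occ (p :: L)).isSome ↔
      ∃ s ∈ parkStep n k occ p, (parkAssign n k (insert s occ) L).isSome := by
  rw [parkAssign]
  cases parkStep n k occ p <;> simp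

theorem le_add_of_mem_parkStep (hs : s ∈ parkStep n k occ p) : s ≤ p + k := by
  grind [parkStep]

theorem mem_sdiff_of_mem_parkStep (hp : p ∈ Icc 1 n) (hs : s ∈ parkStep n k occ p) :
    s ∈ Icc 1 n \ occ := by
  grind [parkStep]

end ParkStep

/-- The non-increasing lists of preferences in `[1, j]` with which the remaining cars, as many as
there are free spots, all park on the street `1, …, n` whose spots `occ` are already taken. -/
def fillings (n k : ℕ) (occ : Finset ℕ) (j : ℕ) : Set (List ℕ) :=
  {L | L.SortedGE ∧ (∀ p ∈ L, p ∈ Icc 1 j) ∧ L.length = #(Icc 1 n \ occ) ∧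
    (parkAssign n k occ L).isSome}

section Fillings

variable {n k m i j p s t : ℕ} {occ : Finset ℕ} {L : List ℕ}

theorem nil_mem_fillings : [] ∈ fillings n k occ j ↔ Icc 1 n ⊆ occ := by
  simp [fillings, parkAssign, eq_comm (a := 0), List.sortedGE_iff_pairwise]

theorem cons_mem_fillings (hp : p ∈ Icc 1 n) :
    p :: L ∈ fillings n k occ j ↔
      p ≤ j ∧ ∃ s ∈ parkStep n k occ p, L ∈ fillings n k (insert s occ) p := by
  have hcard {s : ℕ} (hs : s ∈ parkStep n k occ p) :
      #(Icc 1 n \ insert s occ) + 1 = #(Icc 1 n \ occ) := by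
    rw [sdiff_insert, card_erase_add_one (mem_sdiff_of_mem_parkStep hp hs)]
  simp only [fillings, Set.mem_ofPred_eq, isSome_parkAssign_cons, List.sortedGE_iff_pairwise,
    List.pairwise_cons, List.length_cons, List.mem_cons, forall_eq_or_imp, mem_Icc] at hp ⊢
  constructor
  · rintro ⟨⟨hle, hL⟩, ⟨⟨-, hpj⟩, hpos⟩, hlen, s, hs, hpark⟩
    exact ⟨hpj, s, hs, hL, fun q hq => ⟨(hpos q hq).1, hle q hq⟩, by grind, hpark⟩
  · rintro ⟨hpj, s, hs, hL, hb, hlen, hpark⟩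
    exact ⟨⟨fun q hq => (hb q hq).2, hL⟩,
      ⟨⟨hp.1, hpj⟩, fun q hq => ⟨(hb q hq).1, (hb q hq).2.trans hpj⟩⟩, by grind, s, hs, hpark⟩

theorem mem_Icc_of_cons_mem_fillings (h : p :: L ∈ fillings n k occ j) : p ∈ Icc 1 j :=
  h.2.1 p List.mem_cons_self

theorem fillings_mono (hij : i ≤ j) : fillings n k occ i ⊆ fillings n k occ j :=
  fun _ hL => ⟨hL.1, fun p hp => Icc_subset_Icc_right hij (hL.2.1 p hp), hL.2.2⟩

theorem fillings_eq_singleton_nil (hocc : Icc 1 n ⊆ occ) : fillings n k occ j = {[]} := by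
  refine Set.eq_singleton_iff_unique_mem.2 ⟨nil_mem_fillings.2 hocc, fun L hL => ?_⟩
  rw [← List.length_eq_zero_iff, hL.2.2.1, sdiff_eq_empty_iff_subset.2 hocc, card_empty]

theorem fillings_eq_empty_of_unreachable (hs : s ∈ Icc 1 n \ occ)
    (hreach : ∀ p ∈ Icc 1 j, p + k < s) : fillings n k occ j = ∅ := by
  refine Set.eq_empty_of_forall_notMem fun L => ?_
  induction L generalizing occ j with
  | nil => grind [nil_mem_fillings]
  | cons p L ih =>
    intro hL
    have hpj := mem_Icc_of_cons_mem_fillings hL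
    have hps := hreach p hpj
    obtain ⟨-, t, ht, hL⟩ := (cons_mem_fillings (by grind)).1 hL
    have hts := le_add_of_mem_parkStep ht
    exact ih (by grind) (by grind) hL

theorem fillings_succ (hj : j + 1 ≤ n) :
    fillings n k occ (j + 1) =
      fillings n k occ j ∪
        ⋃ s ∈ parkStep n k occ (j + 1),
          List.cons (j + 1) '' fillings n k (insert s occ) (j + 1) := by
  ext L
  rw [Set.mem_union, Set.mem_iUnion₂]
  constructor
  · intro hL
    rcases L with - | ⟨p, L⟩
    · exact .inl (nil_mem_fillings.2 (nil_mem_fillings.1 hL))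
    have hp := mem_Icc.1 (mem_Icc_of_cons_mem_fillings hL)
    have hpn : p ∈ Icc 1 n := mem_Icc.2 ⟨hp.1, hp.2.trans hj⟩
    obtain ⟨-, s, hs, hL⟩ := (cons_mem_fillings hpn).1 hL
    rcases hp.2.eq_or_lt with rfl | hlt
    · exact .inr ⟨s, hs, L, hL, rfl⟩
    · exact .inl ((cons_mem_fillings hpn).2 ⟨Nat.le_of_lt_succ hlt, s, hs, hL⟩)
  · rintro (hL | ⟨s, hs, L, hL, rfl⟩)
    · exact fillings_mono j.le_succ hL
    · exact (cons_mem_fillings (by grind)).2 ⟨le_rfl, s, hs, hL⟩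

theorem fillings_succ_of_parkStep_eq_none (hj : j + 1 ≤ n)
    (hpark : parkStep n k occ (j + 1) = none) :
    fillings n k occ (j + 1) = fillings n k occ j := by
  rw [fillings_succ hj, hpark]
  simp

theorem encard_fillings_succ_of_parkStep_eq_some (hj : j + 1 ≤ n)
    (hpark : parkStep n k occ (j + 1) = some t) :
    (fillings n k occ (j + 1)).encard =
      (fillings n k occ j).encard + (fillings n k (insert t occ) (j + 1)).encard := by
  have hunion : fillings n k occ (j + 1) =
      fillings n k occ j ∪ List.cons (j + 1) '' fillings n k (insert t occ) (j + 1) := by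
    rw [fillings_succ hj, hpark]
    simp
  have hdisj : Disjoint (fillings n k occ j)
      (List.cons (j + 1) '' fillings n k (insert t occ) (j + 1)) := by
    rw [Set.disjoint_right]
    rintro _ ⟨L, -, rfl⟩ hL
    simpa using mem_Icc_of_cons_mem_fillings hL
  rw [hunion, Set.encard_union_eq hdisj, List.cons_injective.encard_image]

theorem encard_fillings_succ_of_unreachable (hj : j + 1 ≤ n)
    (hpark : parkStep n k occ (j + 1) = some t) (hs : s ∈ Icc 1 n \ occ)
    (hreach : ∀ p ∈ Icc 1 j, p + k < s) :
    (fillings n k occ (j + 1)).encard = (fillings n k (insert t occ) (j + 1)).encard := by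
  rw [encard_fillings_succ_of_parkStep_eq_some hj hpark,
    fillings_eq_empty_of_unreachable hs hreach, Set.encard_empty, zero_add]

theorem encard_fillings_Ioc_succ_self (hm : m + 1 ≤ n) :
    (fillings n k (Ioc (m + 1) n) (m + 1)).encard =
      (fillings n k (Ioc (m + 1) n) m).encard + (fillings n k (Ioc m n) (m + 1)).encard := by
  rw [encard_fillings_succ_of_parkStep_eq_some (t := m + 1) hm (by simp [parkStep]),
    insert_Ioc_add_one_left_eq_Ioc hm]

theorem fillings_Ioc_one_zero (hn : 1 ≤ n) : fillings n k (Ioc 1 n) 0 = ∅ :=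
  fillings_eq_empty_of_unreachable (s := 1) (by grind) (by simp)

theorem fillings_Ioc_zero : fillings n k (Ioc 0 n) j = {[]} :=
  fillings_eq_singleton_nil (Icc_add_one_left_eq_Ioc 0 n).le

end Fillings

section Vacillating

variable {n m : ℕ}

theorem fillings_Ioc_add_two (hm : m + 2 ≤ n) :
    fillings n 1 (Ioc m n) (m + 2) = fillings n 1 (Ioc m n) (m + 1) :=
  fillings_succ_of_parkStep_eq_none hm (by grind [parkStep])

theorem encard_fillings_Ioc_succ (hm : m + 2 ≤ n) :
    (fillings n 1 (Ioc (m + 1) n) (m + 2)).encard =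
      2 * (fillings n 1 (Ioc m n) (m + 1)).encard +
        (fillings n 1 (Ioc (m + 1) n) m).encard := by
  rw [encard_fillings_succ_of_parkStep_eq_some (t := m + 1) hm (by grind [parkStep]),
    insert_Ioc_add_one_left_eq_Ioc (by lia), encard_fillings_Ioc_succ_self (by lia),
    fillings_Ioc_add_two hm]
  ring

theorem encard_fillings_Ioc_add_three (hm : m + 3 ≤ n) :
    (fillings n 1 (Ioc (m + 3) n) (m + 2)).encard =
      (fillings n 1 (Ioc m n) (m + 1)).encard := by
  have hreach : ∀ p ∈ Icc 1 (m + 1), p + 1 < m + 3 := by grind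
  have hinsert : insert (m + 3) (insert (m + 1) (insert (m + 2) (Ioc (m + 3) n))) = Ioc m n := by
    grind
  calc (fillings n 1 (Ioc (m + 3) n) (m + 2)).encard
    _ = (fillings n 1 (insert (m + 2) (Ioc (m + 3) n)) (m + 2)).encard :=
      encard_fillings_succ_of_unreachable (by lia) (by grind [parkStep]) (by grind) hreach
    _ = (fillings n 1 (insert (m + 1) (insert (m + 2) (Ioc (m + 3) n))) (m + 2)).encard :=
      encard_fillings_succ_of_unreachable (by lia) (by grind [parkStep]) (by grind) hreach
    _ = (fillings n 1 (Ioc m n) (m + 2)).encard := by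
      rw [← hinsert]
      exact encard_fillings_succ_of_unreachable (by lia) (by grind [parkStep]) (by grind) hreach
    _ = (fillings n 1 (Ioc m n) (m + 1)).encard := by rw [fillings_Ioc_add_two (by lia)]

theorem encard_fillings_Ioc_two_one (hn : 2 ≤ n) :
    (fillings n 1 (Ioc 2 n) 1).encard = 1 := by
  have hreach : ∀ p ∈ Icc 1 0, p + 1 < 2 := by simp
  have hinsert : insert 2 (insert 1 (Ioc 2 n)) = Ioc 0 n := by grind
  calc (fillings n 1 (Ioc 2 n) 1).encard
    _ = (fillings n 1 (insert 1 (Ioc 2 n)) 1).encard :=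
      encard_fillings_succ_of_unreachable (by lia) (by grind [parkStep]) (by grind) hreach
    _ = (fillings n 1 (Ioc 0 n) 1).encard := by
      rw [← hinsert]
      exact encard_fillings_succ_of_unreachable (by lia) (by grind [parkStep]) (by grind) hreach
    _ = 1 := by rw [fillings_Ioc_zero, Set.encard_singleton]

/-- The sequence `0, 1, 1, 2, 5, 11, …` whose terms with indices `m + 2` and `m` count the fillings
with `m` and `m + 1` free spots, respectively, in `encard_fillings_Ioc`.  The first three terms
continue the recurrence backwards, so that one sequence serves both families. -/
def fillingCount : ℕ → ℕ
  | 0 => 0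
  | 1 => 1
  | 2 => 1
  | m + 3 => 2 * fillingCount (m + 2) + fillingCount m

theorem fillingCount_add_three (m : ℕ) :
    fillingCount (m + 3) = 2 * fillingCount (m + 2) + fillingCount m :=
  rfl

theorem encard_fillings_Ioc (hm : m + 1 ≤ n) :
    (fillings n 1 (Ioc m n) (m + 1)).encard = fillingCount (m + 2) ∧
      (fillings n 1 (Ioc (m + 1) n) m).encard = fillingCount m := by
  induction m using Nat.twoStepInduction with
  | zero => simp [fillings_Ioc_zero, fillings_Ioc_one_zero hm, fillingCount]
  | one =>
    simp [encard_fillings_Ioc_succ hm, encard_fillings_Ioc_two_one hm, fillings_Ioc_zero,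
      fillings_Ioc_one_zero (Nat.le_of_succ_le hm), fillingCount]
  | more m ih ih' =>
    obtain ⟨htaken, -⟩ := ih (by lia)
    obtain ⟨htaken', hfree'⟩ := ih' (by lia)
    rw [encard_fillings_Ioc_succ hm, encard_fillings_Ioc_add_three hm, htaken, htaken', hfree',
      fillingCount_add_three]
    push_cast
    exact ⟨rfl, rfl⟩

theorem encard_fillings_empty (m : ℕ) :
    (fillings (m + 1) 1 ∅ (m + 1)).encard = (fillingCount m + fillingCount (m + 2) : ℕ) := by
  obtain ⟨htaken, hfree⟩ := encard_fillings_Ioc le_rfl (m := m)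
  rw [← Ioc_self (m + 1), encard_fillings_Ioc_succ_self le_rfl, htaken, hfree, Nat.cast_add]

end Vacillating

theorem prefList_injective {m n : ℕ} : Function.Injective (prefList (m := m) (n := n)) :=
  fun _ _ h => funext fun i => Fin.ext (Nat.succ_injective (congrFun (List.ofFn_injective h) i))

theorem range_prefList (m n : ℕ) :
    Set.range (prefList (m := m) (n := n)) = {L | L.length = m ∧ ∀ p ∈ L, p ∈ Icc 1 n} := by
  ext L
  constructor
  · rintro ⟨α, rfl⟩
    exact ⟨List.length_ofFn, List.forall_mem_ofFn_iff.2 fun i => by grind⟩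
  · rintro ⟨rfl, hL⟩
    have hget (i : Fin L.length) := mem_Icc.1 (hL L[i] (by simp))
    refine ⟨fun i => ⟨L[i] - 1, by grind⟩, ?_⟩
    refine .trans (congrArg List.ofFn (funext fun i => ?_)) List.ofFn_getElem
    exact Nat.sub_add_cancel (hget i).1

theorem sortedGE_prefList_iff {m n : ℕ} {α : Fin m → Fin n} :
    (prefList α).SortedGE ↔ Antitone α := by
  simp [prefList, Antitone]

theorem prefList_mem_fillings_iff {n : ℕ} {α : Fin n → Fin n} :
    prefList α ∈ fillings n 1 ∅ n ↔ α ∈ VPFdown n := by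
  have hrange := (range_prefList n n).le ⟨α, rfl⟩
  simp only [Set.mem_ofPred_eq] at hrange
  simp only [fillings, Set.mem_ofPred_eq, sortedGE_prefList_iff, hrange.1, sdiff_empty,
    Nat.card_Icc, Nat.add_sub_cancel, true_and, VPFdown, VPF, VPFk, mem_filter, mem_univ]
  exact ⟨fun h => ⟨h.2.2, h.1⟩, fun h => ⟨h.2, hrange.2, h.1⟩⟩

theorem image_prefList_VPFdown (n : ℕ) :
    prefList '' (VPFdown n : Set (Fin n → Fin n)) = fillings n 1 ∅ n := by
  have hsub : fillings n 1 ∅ n ⊆ Set.range (prefList (m := n) (n := n)) := by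
    rw [range_prefList]
    exact fun L hL => ⟨by simpa using hL.2.2.1, hL.2.1⟩
  rw [← Set.image_preimage_eq_of_subset hsub]
  congr 1
  exact Set.ext fun _ => prefList_mem_fillings_iff.symm

theorem card_VPFdown_succ (m : ℕ) :
    #(VPFdown (m + 1)) = fillingCount m + fillingCount (m + 2) := by
  have h := encard_fillings_empty m
  rw [← image_prefList_VPFdown, prefList_injective.encard_image,
    Set.encard_coe_eq_coe_finsetCard] at h
  exact_mod_cast h

/-- `|VPF_1^↓| = 1`, `|VPF_2^↓| = 3`, `|VPF_3^↓| = 6`, and for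
`n ≥ 4`, `|VPF_n^↓| = 2·|VPF_{n-1}^↓| + |VPF_{n-3}^↓|`. -/
theorem vpfdown_recurrence :
    (VPFdown 1).card = 1 ∧ (VPFdown 2).card = 3 ∧ (VPFdown 3).card = 6 ∧
      ∀ n : ℕ, 4 ≤ n →
        (VPFdown n).card = 2 * (VPFdown (n-1)).card + (VPFdown (n-3)).card := by
  refine ⟨card_VPFdown_succ 0, card_VPFdown_succ 1, card_VPFdown_succ 2, fun n hn => ?_⟩
  obtain ⟨m, rfl⟩ := Nat.exists_eq_add_of_le' hn
  rw [show m + 4 - 1 = m + 2 + 1 from rfl, show m + 4 - 3 = m + 1 from rfl, card_VPFdown_succ,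
    card_VPFdown_succ, card_VPFdown_succ, fillingCount_add_three m, fillingCount_add_three (m + 2)]
  ring
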